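/- Let f_1,…,f_n be MRF (submodular dichotomous) valuations on a finite item set M, let σ be a priority order, and let A be a non-redundant σ-Lorenz dominating allocation. Then no agent envies an agent of lower priority: for all agents u, v with σ(u) < σ(v), f_u(A_u) ≥ f_u(A_v). -/

import Mathlib

open Finset
open scoped Classical

variable {n : ℕ} {I : Type*} [DecidableEq I] [Fintype I]

/-- An allocation assigns pairwise disjoint bundles of items to the agents
(items may remain unallocated). -/
def IsAllocation (A : Fin n → Finset I) : Prop :=
  ∀ i j : Fin n, i ≠ j → Disjoint (A i) (A j)

/-- The vector of utilities of an allocation under a profile of valuations. -/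
def util {α : Type*} (f : Fin n → Finset I → α) (A : Fin n → Finset I) : Fin n → α :=
  fun i => f i (A i)

/-- The entries of the vector `u`, sorted in nondecreasing order. -/
noncomputable def sortedVec {α : Type*} [LinearOrder α] (u : Fin n → α) : List α :=
  (Finset.univ.val.map u).sort (· ≤ ·)

/-- `u` Lorenz-dominates `v`: for each `k`, the sum of the `k` smallest entries of `u`
is at least the sum of the `k` smallest entries of `v`. -/
def LorenzGE {α : Type*} [LinearOrder α] [AddCommMonoid α] (u v : Fin n → α) : Prop :=
  ∀ k : ℕ, ((sortedVec v).take k).sum ≤ ((sortedVec u).take k).sum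

/-- A matroid rank function: a normalized submodular valuation with dichotomous marginals. -/
structure IsMRF (f : Finset I → ℕ) : Prop where
  empty : f ∅ = 0
  submod : ∀ S T : Finset I, S ⊆ T → ∀ a : I,
      f (insert a T) + f S ≤ f (insert a S) + f T
  dichot : ∀ (S : Finset I) (a : I), f (insert a S) = f S ∨ f (insert a S) = f S + 1

/-- Non-redundancy: removing any item from any agent's bundle strictly decreases its value. -/
def NonRedundant (f : Fin n → Finset I → ℕ) (A : Fin n → Finset I) : Prop :=
  ∀ i : Fin n, ∀ a ∈ A i, f i ((A i).erase a) < f i (A i)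

/-- A Lorenz dominating allocation. -/
def LorenzDominating (f : Fin n → Finset I → ℕ) (A : Fin n → Finset I) : Prop :=
  ∀ B : Fin n → Finset I, IsAllocation B → LorenzGE (util f A) (util f B)

/-- The σ-perturbed utilities: agent `i` gets `f i (A i) + σ(i)/n²`, where the priority
`σ(i)` ranges over `{1,…,n}`. -/
noncomputable def pUtil (σ : Equiv.Perm (Fin n)) (f : Fin n → Finset I → ℕ)
    (A : Fin n → Finset I) : Fin n → ℝ :=
  fun i => (f i (A i) : ℝ) + (((σ i : ℕ) : ℝ) + 1) / (n : ℝ) ^ 2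

/-- A σ-Lorenz dominating allocation. -/
def SigmaLorenzDom (σ : Equiv.Perm (Fin n)) (f : Fin n → Finset I → ℕ)
    (A : Fin n → Finset I) : Prop :=
  ∀ B : Fin n → Finset I, IsAllocation B → LorenzGE (pUtil σ f A) (pUtil σ f B)

/-- Restriction of a valuation to a subset `D` of the items. -/
def restrictVal (f : Finset I → ℕ) (D : Finset I) : Finset I → ℕ := fun S => f (S ∩ D)

/-- A partition of all the items into `n` (possibly empty) bundles. -/
def IsPartition (P : Fin n → Finset I) : Prop :=
  (∀ i j : Fin n, i ≠ j → Disjoint (P i) (P j)) ∧ ∀ a : I, ∃ j, a ∈ P j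

/-- An XOS valuation: the pointwise maximum of a finite nonempty family of
nonnegative additive valuations. -/
def IsXOS (f : Finset I → ℝ) : Prop :=
  ∃ (k : ℕ) (w : Fin (k + 1) → I → ℝ),
    (∀ t a, 0 ≤ w t a) ∧
    ∀ S : Finset I, f S = Finset.univ.sup' Finset.univ_nonempty (fun t => ∑ a ∈ S, w t a)

/-- A dichotomous valuation (real-valued version). -/
def IsDichotomousR (f : Finset I → ℝ) : Prop :=
  ∀ (S : Finset I) (a : I), f (insert a S) = f S ∨ f (insert a S) = f S + 1

/-- Envy-freeness up to one good. -/
def EF1 (f : Fin n → Finset I → ℝ) (A : Fin n → Finset I) : Prop :=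
  ∀ i j : Fin n, f i (A j) ≤ f i (A i) ∨ ∃ e ∈ A j, f i ((A j).erase e) ≤ f i (A i)

/-- The maximum welfare attainable by a set `S` of agents. -/
noncomputable def maxWelfare (f : Fin n → Finset I → ℕ) (S : Finset (Fin n)) : ℕ :=
  Finset.sup (Finset.univ.filter fun B : Fin n → Finset I => IsAllocation B)
    (fun B => ∑ j ∈ S, f j (B j))

/-- An allocation extended with index `none` for the set of unallocated items. -/
def extAlloc (A : Fin n → Finset I) : Option (Fin n) → Finset I
  | none => Finset.univ \ Finset.univ.biUnion A
  | some i => A i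

/-!
If `u` envied an agent `v` of lower priority, matroid augmentation would give an item of `A v` with
positive marginal value for `u`. Non-redundancy makes `A v` independent for `v`, so `v` values it at
least as highly as `u` does, hence strictly above `f u (A u)`; handing that item to `u` therefore
leaves both of them, after perturbation, strictly above the old utility of `u`. Lorenz domination
excludes this, because it implies domination of every truncated sum `∑ i, min (p i) t`: this sum is
the minimum over `k` of `(sum of the k smallest entries of p) + (n - k) • t`.
-/

section Lorenz

variable {α : Type*} [LinearOrder α]

theorem length_sortedVec (p : Fin n → α) : (sortedVec p).length = n := by
  simp [sortedVec]

theorem pairwise_le_sortedVec (p : Fin n → α) : (sortedVec p).Pairwise (· ≤ ·) :=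
  Multiset.pairwise_sort _ _

theorem sum_map_sortedVec {β : Type*} [AddCommMonoid β] (g : α → β) (p : Fin n → α) :
    ((sortedVec p).map g).sum = ∑ i, g (p i) := by
  rw [← Multiset.sum_coe, ← Multiset.map_coe, sortedVec, Multiset.sort_eq, Multiset.map_map]
  rfl

variable [AddCommMonoid α]

theorem exists_sum_map_min_eq_sum_take_add_nsmul {l : List α} (hl : l.Pairwise (· ≤ ·)) (t : α) :
    ∃ k, (l.map (min · t)).sum = (l.take k).sum + (l.length - k) • t := by
  induction l with
  | nil => exact ⟨0, by simp⟩
  | cons a l ih =>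
    obtain ⟨ha, hl⟩ := List.pairwise_cons.1 hl
    rcases le_total a t with hat | hta
    · obtain ⟨k, hk⟩ := ih hl
      exact ⟨k + 1, by simp [hat, hk, add_assoc]⟩
    · have hconst : (a :: l).map (min · t) = (a :: l).map fun _ => t :=
        List.map_congr_left fun b hb => min_eq_right <|
          (List.mem_cons.1 hb).elim (fun h => h ▸ hta) fun h => hta.trans (ha b h)
      exact ⟨0, by rw [hconst]; simp [add_nsmul, add_comm]⟩

section OrderedAddMonoid

variable [IsOrderedAddMonoid α]

theorem sum_map_min_le_sum_take_add_nsmul (l : List α) (k : ℕ) (t : α) :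
    (l.map (min · t)).sum ≤ (l.take k).sum + (l.length - k) • t := by
  have htake : ((l.take k).map (min · t)).sum ≤ (l.take k).sum := by
    simpa using List.sum_le_sum (l := l.take k) (f := (min · t)) (g := id)
      fun a _ => min_le_left a t
  have hdrop : ((l.drop k).map (min · t)).sum ≤ (l.length - k) • t := by
    simpa using List.sum_le_card_nsmul ((l.drop k).map (min · t)) t
      (List.forall_mem_map.2 fun a _ => min_le_right a t)
  calc (l.map (min · t)).sum
      = ((l.take k).map (min · t)).sum + ((l.drop k).map (min · t)).sum := by
        rw [← List.sum_append, ← List.map_append, List.take_append_drop]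
    _ ≤ (l.take k).sum + (l.length - k) • t := add_le_add htake hdrop

theorem LorenzGE.sum_min_le {p q : Fin n → α} (h : LorenzGE p q) (t : α) :
    ∑ i, min (q i) t ≤ ∑ i, min (p i) t := by
  obtain ⟨k, hk⟩ := exists_sum_map_min_eq_sum_take_add_nsmul (pairwise_le_sortedVec p) t
  calc ∑ i, min (q i) t
      = ((sortedVec q).map (min · t)).sum := (sum_map_sortedVec (min · t) q).symm
    _ ≤ ((sortedVec q).take k).sum + (n - k) • t := by
        simpa only [length_sortedVec] using sum_map_min_le_sum_take_add_nsmul (sortedVec q) k t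
    _ ≤ ((sortedVec p).take k).sum + (n - k) • t := by gcongr; exact h k
    _ = ((sortedVec p).map (min · t)).sum := by rw [hk, length_sortedVec]
    _ = ∑ i, min (p i) t := sum_map_sortedVec (min · t) p

end OrderedAddMonoid

variable [IsOrderedCancelAddMonoid α]

theorem not_lorenzGE_of_min_le {p q : Fin n → α} {t : α} (hle : ∀ i, min (p i) t ≤ q i)
    {u : Fin n} (hut : p u < t) (huq : p u < q u) : ¬ LorenzGE p q := by
  intro h
  refine (h.sum_min_le t).not_gt (Finset.sum_lt_sum (fun i _ => ?_) ⟨u, Finset.mem_univ u, ?_⟩)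
  · exact le_min (hle i) (min_le_right _ _)
  · exact (min_le_left _ _).trans_lt (lt_min huq hut)

theorem not_lorenzGE_of_transfer {p q : Fin n → α} {u v : Fin n} (hu : p u < q u)
    (hv : p u < q v) (hrest : ∀ i, i ≠ u → i ≠ v → p i ≤ q i) : ¬ LorenzGE p q := by
  refine not_lorenzGE_of_min_le (t := min (q u) (q v)) (fun i => ?_) (lt_min hu hv) hu
  by_cases hiu : i = u
  · exact hiu ▸ (min_le_right _ _).trans (min_le_left _ _)
  by_cases hiv : i = v
  · exact hiv ▸ (min_le_right _ _).trans (min_le_right _ _)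
  exact (min_le_left _ _).trans (hrest i hiu hiv)

end Lorenz

namespace IsMRF

variable {J : Type*} [DecidableEq J] {g : Finset J → ℕ}

theorem le_insert (hg : IsMRF g) (S : Finset J) (a : J) : g S ≤ g (insert a S) := by
  rcases hg.dichot S a with h | h <;> omega

theorem insert_le_add_one (hg : IsMRF g) (S : Finset J) (a : J) : g (insert a S) ≤ g S + 1 := by
  rcases hg.dichot S a with h | h <;> omega

theorem monotone (hg : IsMRF g) : Monotone g :=
  Finset.monotone_iff_forall_le_insert.2 fun S a _ => hg.le_insert S a

theorem le_erase_add_one (hg : IsMRF g) (S : Finset J) (a : J) : g S ≤ g (S.erase a) + 1 :=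
  (hg.monotone (Finset.insert_erase_subset a S)).trans (hg.insert_le_add_one _ a)

theorem le_card (hg : IsMRF g) (S : Finset J) : g S ≤ #S := by
  induction S using Finset.induction_on with
  | empty => simp [hg.empty]
  | insert a S ha ih =>
    rw [Finset.card_insert_of_notMem ha]
    exact (hg.insert_le_add_one S a).trans (Nat.add_le_add_right ih 1)

theorem eq_card_of_forall_erase_lt (hg : IsMRF g) {S : Finset J}
    (hS : ∀ a ∈ S, g (S.erase a) < g S) : g S = #S := by
  refine Finset.induction_on' (motive := fun T => g T = #T) S (by simp [hg.empty]) ?_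
  intro a T haS hTS haT ih
  have hsubmod := hg.submod T (S.erase a) (Finset.subset_erase.2 ⟨hTS, haT⟩) a
  rw [Finset.insert_erase haS] at hsubmod
  have hlt := hS a haS
  have hle := hg.insert_le_add_one T a
  rw [Finset.card_insert_of_notMem haT]
  omega

theorem le_of_forall_erase_lt {h : Finset J → ℕ} (hg : IsMRF g) (hh : IsMRF h) {S : Finset J}
    (hS : ∀ a ∈ S, h (S.erase a) < h S) : g S ≤ h S :=
  (hg.le_card S).trans_eq (hh.eq_card_of_forall_erase_lt hS).symm

theorem union_eq_of_forall_insert_eq (hg : IsMRF g) {S T : Finset J}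
    (hT : ∀ a ∈ T, g (insert a S) = g S) : g (T ∪ S) = g S := by
  induction T using Finset.induction_on with
  | empty => simp
  | insert a T _ ih =>
    have hunion := ih fun b hb => hT b (Finset.mem_insert_of_mem hb)
    have ha := hT a (Finset.mem_insert_self a T)
    have hsubmod := hg.submod S (T ∪ S) Finset.subset_union_right a
    have hle := hg.le_insert (T ∪ S) a
    rw [Finset.insert_union]
    omega

theorem exists_insert_eq_add_one (hg : IsMRF g) {S T : Finset J} (hlt : g S < g T) :
    ∃ a ∈ T, g (insert a S) = g S + 1 := by
  by_contra! hne
  have hunion : g (T ∪ S) = g S :=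
    hg.union_eq_of_forall_insert_eq fun a ha => (hg.dichot S a).resolve_right (hne a ha)
  exact hlt.not_ge (hunion ▸ hg.monotone Finset.subset_union_left)

end IsMRF

section Reassign

variable {J : Type*} [DecidableEq J] {A : Fin n → Finset J}

/-- The bundles obtained from `A` by handing the item `a` to agent `u`. The item is erased from
every other bundle, so that its previous owner need not be named. -/
def reassign (A : Fin n → Finset J) (a : J) (u : Fin n) : Fin n → Finset J :=
  fun i => if i = u then insert a (A i) else (A i).erase a

theorem reassign_self (A : Fin n → Finset J) (a : J) (u : Fin n) :
    reassign A a u u = insert a (A u) :=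
  if_pos rfl

theorem reassign_of_ne (A : Fin n → Finset J) (a : J) {u i : Fin n} (hi : i ≠ u) :
    reassign A a u i = (A i).erase a :=
  if_neg hi

theorem mem_reassign {a b : J} {u i : Fin n} :
    b ∈ reassign A a u i ↔ b = a ∧ i = u ∨ b ≠ a ∧ b ∈ A i := by
  by_cases hi : i = u
  · subst hi
    rw [reassign_self, Finset.mem_insert]
    tauto
  · rw [reassign_of_ne A a hi, Finset.mem_erase]
    tauto

theorem IsAllocation.reassign (hA : IsAllocation A) (a : J) (u : Fin n) :
    IsAllocation (reassign A a u) := by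
  intro i j hij
  refine Finset.disjoint_left.2 fun b hbi hbj => ?_
  rcases mem_reassign.1 hbi with ⟨hba, hiu⟩ | ⟨hba, hbi⟩ <;>
    rcases mem_reassign.1 hbj with ⟨hba', hju⟩ | ⟨hba', hbj⟩
  · exact hij (hiu.trans hju.symm)
  · exact hba' hba
  · exact hba hba'
  · exact Finset.disjoint_left.1 (hA i j hij) hbi hbj

theorem reassign_of_ne_of_ne (hA : IsAllocation A) {a : J} {u v i : Fin n} (ha : a ∈ A v)
    (hiu : i ≠ u) (hiv : i ≠ v) : reassign A a u i = A i := by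
  rw [reassign_of_ne A a hiu]
  exact Finset.erase_eq_of_notMem (Finset.disjoint_right.1 (hA i v hiv) ha)

end Reassign

theorem priority_div_sq_lt {σ : Equiv.Perm (Fin n)} {u v : Fin n} (huv : σ u < σ v) :
    ((σ u : ℕ) + 1 : ℝ) / (n : ℝ) ^ 2 < ((σ v : ℕ) + 1) / (n : ℝ) ^ 2 := by
  have hn : (0 : ℝ) < n := Nat.cast_pos.2 u.pos
  gcongr
  exact huv

/-- The utilities of the agents under `A`, perturbed by an arbitrary vector `w` that breaks ties;
`pUtil σ f A` is the case `w i = σ(i)/n²`. -/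
def perturbedUtil {J : Type*} (w : Fin n → ℝ) (f : Fin n → Finset J → ℕ) (A : Fin n → Finset J) :
    Fin n → ℝ :=
  fun i => f i (A i) + w i

theorem PE_no_envy_towards_lower_priority_general {J : Type*} [DecidableEq J] {w : Fin n → ℝ}
    {f : Fin n → Finset J → ℕ} {A : Fin n → Finset J} (hA : IsAllocation A)
    (hLD : ∀ B, IsAllocation B → LorenzGE (perturbedUtil w f A) (perturbedUtil w f B))
    {u v : Fin n} (hu : IsMRF (f u)) (hv : IsMRF (f v))
    (hNR : ∀ a ∈ A v, f v ((A v).erase a) < f v (A v)) (huv : w u < w v) :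
    f u (A v) ≤ f u (A u) := by
  by_contra! henvy
  obtain ⟨a, hav, hau⟩ := hu.exists_insert_eq_add_one henvy
  have hvu : v ≠ u := fun h => huv.ne (congrArg w h.symm)
  have hle : f u (A u) ≤ f v ((A v).erase a) := Nat.lt_succ_iff.1 <|
    calc f u (A u) < f u (A v) := henvy
      _ ≤ f v (A v) := hu.le_of_forall_erase_lt hv hNR
      _ ≤ f v ((A v).erase a) + 1 := hv.le_erase_add_one (A v) a
  refine not_lorenzGE_of_transfer (u := u) (v := v) ?_ ?_ ?_ (hLD _ (hA.reassign a u))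
  · simp [perturbedUtil, reassign_self, hau]
  · simp only [perturbedUtil, reassign_of_ne A a hvu]
    exact add_lt_add_of_le_of_lt (Nat.cast_le.2 hle) huv
  · intro i hiu hiv
    simp only [perturbedUtil, reassign_of_ne_of_ne hA hav hiu hiv, le_refl]

/-- In a non-redundant σ-Lorenz dominating allocation for MRF valuations, no agent
envies an agent of lower priority. -/
theorem PE_no_envy_towards_lower_priority
    {n : ℕ} {I : Type*} [DecidableEq I] [Fintype I]
    (σ : Equiv.Perm (Fin n))
    (f : Fin n → Finset I → ℕ) (hf : ∀ i, IsMRF (f i))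
    (A : Fin n → Finset I) (hA : IsAllocation A)
    (hNR : NonRedundant f A) (hLD : SigmaLorenzDom σ f A)
    (u v : Fin n) (huv : σ u < σ v) :
    f u (A v) ≤ f u (A u) :=
  PE_no_envy_towards_lower_priority_general hA hLD (hf u) (hf v) (hNR v) (priority_div_sq_lt huv)
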